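/- For all real numbers y₁ > 0 and y₂ > 0: L(y₁y₂/(1+y₂+y₁y₂)) + L(y₁y₂/(1+y₁+y₁y₂)) + L(y₁/((1+y₁)(1+y₂))) + L(y₂/((1+y₁)(1+y₂))) + L(1/(1+y₁+y₁y₂)) + L(1/(1+y₂+y₁y₂)) = π²/3, where L is the Rogers dilogarithm. (Each of the six arguments lies in the open interval (0,1).) -/

import Mathlib

/-!
The derivative of the Rogers dilogarithm is `L'(x) = -(log (1 - x) / x + log x / (1 - x)) / 2`,
so the derivative of `L (p / (p + r))` is a rational combination of `log p`, `log r` and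
`log (p + r)`. In all six terms `p`, `r` and `p + r` are products of `y₁`, `y₂`, `1 + y₁`,
`1 + y₂`, `1 + y₁ + y₁ y₂` and `1 + y₂ + y₁ y₂`. With `y₂` fixed, the derivative of the sum with
respect to `y₁` is therefore a combination of six logarithms, and every coefficient vanishes
(`hasDerivAt_sixSum`).

Since `L` is continuous on the closed interval `[0, 1]` (`continuousOn_rogersL`), the sum equals
its value at `y₁ = 0`, which is `L 1 + L (y₂ / (1 + y₂)) + L (1 / (1 + y₂))`. Here `L 1 = π² / 6`
is the Basel sum (`integral_log_one_sub_div`), and the other two terms add up to `π² / 6` by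
Euler's reflection formula (`rogersL_add_rogersL_one_sub`), itself obtained from a vanishing
derivative.
-/

/-- The Rogers dilogarithm, for `0 < x < 1`:
`L(x) = −∫₀ˣ log(1−t)/t dt + (1/2)·log x · log(1−x)`. -/
noncomputable def rogersL (x : ℝ) : ℝ :=
  (-(∫ t in (0:ℝ)..x, Real.log (1 - t) / t)) + (1 / 2) * Real.log x * Real.log (1 - x)

open Real Set MeasureTheory Filter Topology

/-- On `(0, 1)` the integrand is dominated by `1 - log (1 - t)`, since `-s log s ≤ 1 - s`
for `s = 1 - t`. -/
lemma intervalIntegrable_log_one_sub_div :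
    IntervalIntegrable (fun t : ℝ => log (1 - t) / t) volume 0 1 := by
  have h1 : IntervalIntegrable (fun t : ℝ => 1 - log (1 - t)) volume 0 1 := by
    refine intervalIntegrable_const.sub ?_
    have := (intervalIntegral.intervalIntegrable_log' (a := 1) (b := 0)).comp_sub_left 1
    simpa using this
  have hm : Measurable (fun t : ℝ => log (1 - t) / t) := by fun_prop
  refine h1.mono_fun' hm.aestronglyMeasurable ?_
  rw [uIoc_of_le zero_le_one]
  have hne : ∀ᵐ t : ℝ ∂(volume.restrict (Ioc (0:ℝ) 1)), t ≠ 1 :=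
    ae_restrict_of_ae (by simp [ae_iff])
  filter_upwards [ae_restrict_mem measurableSet_Ioc, hne] with t ht ht1
  have h0 : 0 < 1 - t := sub_pos.2 (lt_of_le_of_ne ht.2 ht1)
  have hneg : log (1 - t) ≤ 0 := log_nonpos h0.le (by linarith [ht.1])
  have h2 := one_sub_inv_le_log_of_pos h0
  have h3 : -t ≤ (1 - t) * log (1 - t) := by
    have := mul_le_mul_of_nonneg_left h2 h0.le
    rw [mul_sub, mul_inv_cancel₀ h0.ne'] at this
    linarith
  rw [norm_div, norm_eq_abs, norm_eq_abs, abs_of_nonpos hneg, abs_of_pos ht.1, div_le_iff₀ ht.1]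
  linarith

/-- Integrating `-log (1 - t) / t = ∑ tⁿ / (n + 1)` termwise reduces this to the Basel sum. -/
lemma integral_log_one_sub_div :
    ∫ t in (0:ℝ)..1, log (1 - t) / t = -(π ^ 2 / 6) := by
  have hI : ∀ n : ℕ, ∫ t in Ioo (0:ℝ) 1, t ^ n / ((n:ℝ) + 1) = 1 / ((n:ℝ) + 1) ^ 2 := by
    intro n
    rw [← integral_Ioc_eq_integral_Ioo, ← intervalIntegral.integral_of_le zero_le_one,
      intervalIntegral.integral_div, integral_pow]
    simp
    field_simp
  have hz : HasSum (fun n : ℕ => 1 / ((n:ℝ) + 1) ^ 2) (π ^ 2 / 6) := by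
    have := (hasSum_nat_add_iff' 1).2 hasSum_zeta_two
    simpa using this
  have hs := hasSum_integral_of_summable_integral_norm
    (μ := volume.restrict (Ioo (0:ℝ) 1)) (F := fun (n : ℕ) (t : ℝ) => t ^ n / ((n:ℝ) + 1))
    (fun n => by
      have hc : Continuous fun t : ℝ => t ^ n / ((n:ℝ) + 1) := by fun_prop
      exact (hc.integrableOn_Icc (a := 0) (b := 1)).mono_set Ioo_subset_Icc_self)
    (by
      refine hz.summable.congr fun n => ?_
      rw [← hI n]
      refine (setIntegral_congr_fun measurableSet_Ioo fun t ht => ?_)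
      have := ht.1
      exact (norm_of_nonneg (show 0 ≤ t ^ n / ((n:ℝ) + 1) by positivity)).symm)
  simp only [hI] at hs
  have he : ∫ t in Ioo (0:ℝ) 1, ∑' n : ℕ, t ^ n / ((n:ℝ) + 1)
      = ∫ t in Ioo (0:ℝ) 1, -(log (1 - t) / t) := by
    refine setIntegral_congr_fun measurableSet_Ioo fun t ht => ?_
    have h := (hasSum_pow_div_log_of_abs_lt_one (x := t)
      (by rw [abs_of_pos ht.1]; exact ht.2)).div_const t
    have := ht.1.ne'
    rw [← neg_div, ← h.tsum_eq]
    congr 1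
    ext n
    rw [pow_succ]
    field_simp
  rw [he, integral_neg] at hs
  rw [intervalIntegral.integral_of_le zero_le_one, integral_Ioc_eq_integral_Ioo]
  linarith [hs.unique hz]

lemma rogersL_zero : rogersL 0 = 0 := by simp [rogersL]

lemma rogersL_one : rogersL 1 = π ^ 2 / 6 := by simp [rogersL, integral_log_one_sub_div]

/-- The vanishing of one logarithm beats the divergence of the other, and the junk value
`log 0 = 0` is the correct limit of the product. -/
lemma continuousOn_log_mul_log_one_sub :
    ContinuousOn (fun x : ℝ => log x * log (1 - x)) (Icc 0 1) := by
  have h0 : ContinuousAt (fun x : ℝ => log x * log (1 - x)) 0 := by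
    have hd : DifferentiableAt ℝ (fun x : ℝ => log (1 - x)) 0 := by
      refine DifferentiableAt.log (by fun_prop) (by norm_num)
    have he : (fun x : ℝ => log x * log (1 - x)) =
        fun x => x * log x * dslope (fun x : ℝ => log (1 - x)) 0 x := by
      ext x
      have := sub_smul_dslope (fun x : ℝ => log (1 - x)) 0 x
      simp only [sub_zero, log_one, smul_eq_mul] at this
      rw [← this]
      ring
    rw [he]
    exact continuous_mul_log.continuousAt.mul (continuousAt_dslope_same.2 hd)
  intro x hx
  refine ContinuousAt.continuousWithinAt ?_
  rcases hx.1.eq_or_lt with rfl | hx0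
  · exact h0
  rcases hx.2.eq_or_lt with rfl | hx1
  · have hc : ContinuousAt (fun x : ℝ => 1 - x) 1 := by fun_prop
    have := ContinuousAt.comp (f := fun x : ℝ => 1 - x) (x := 1)
      (g := fun x : ℝ => log x * log (1 - x)) (by simpa using h0) hc
    refine this.congr (Eventually.of_forall fun y => ?_)
    simp [mul_comm]
  · exact (continuousAt_log hx0.ne').mul
      (ContinuousAt.log (by fun_prop) (by linarith))

lemma continuousOn_rogersL : ContinuousOn rogersL (Icc 0 1) := by
  have h1 := intervalIntegral.continuousOn_primitive_interval'
    intervalIntegrable_log_one_sub_div (left_mem_uIcc)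
  rw [uIcc_of_le zero_le_one] at h1
  refine (h1.neg.add (continuousOn_log_mul_log_one_sub.const_mul (1 / 2))).congr fun x _ => ?_
  simp [rogersL, mul_assoc]

lemma hasDerivAt_rogersL {x : ℝ} (h0 : 0 < x) (h1 : x < 1) :
    HasDerivAt rogersL (-(1 / 2) * (log (1 - x) / x + log x / (1 - x))) x := by
  have hx : 1 - x ≠ 0 := by linarith
  have hint : IntervalIntegrable (fun t : ℝ => log (1 - t) / t) volume 0 x :=
    intervalIntegrable_log_one_sub_div.mono_set (by
      rw [uIcc_of_le h0.le, uIcc_of_le zero_le_one]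
      exact Icc_subset_Icc_right h1.le)
  have hm : Measurable (fun t : ℝ => log (1 - t) / t) := by fun_prop
  have hI := intervalIntegral.integral_hasDerivAt_right hint
    hm.stronglyMeasurable.stronglyMeasurableAtFilter
    ((ContinuousAt.log (by fun_prop) hx).div continuousAt_id h0.ne')
  have hl : HasDerivAt (fun t : ℝ => log (1 - t)) (-1 / (1 - x)) x :=
    ((hasDerivAt_id x).const_sub 1).log hx
  have h := hI.neg.add (((hasDerivAt_log h0.ne').const_mul (1 / 2)).mul hl)
  refine h.congr_deriv ?_
  field_simp
  ring

/-- The chain rule for `rogersL (p / (p + r))`, with all logarithms of quotients expanded. -/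
lemma hasDerivAt_rogersL_comp {p r : ℝ → ℝ} {p' r' t : ℝ} (hp : HasDerivAt p p' t)
    (hr : HasDerivAt r r' t) (hp0 : 0 < p t) (hr0 : 0 < r t) :
    HasDerivAt (fun s => rogersL (p s / (p s + r s)))
      (-(1 / 2) * (p' * r t - p t * r') *
        (log (r t) / (p t * (p t + r t)) + log (p t) / (r t * (p t + r t))
          - log (p t + r t) / (p t * r t))) t := by
  have hq : 0 < p t + r t := by positivity
  have hx : 1 - p t / (p t + r t) = r t / (p t + r t) := by field_simp; ring
  have hL := hasDerivAt_rogersL (x := p t / (p t + r t)) (by positivity)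
    ((div_lt_one hq).2 (by linarith))
  rw [hx, log_div hr0.ne' hq.ne', log_div hp0.ne' hq.ne'] at hL
  refine (hL.comp t (hp.div (hp.add hr) hq.ne')).congr_deriv ?_
  simp only [Pi.add_apply]
  field_simp
  ring

/-- Euler's reflection formula. -/
lemma rogersL_add_rogersL_one_sub {x : ℝ} (h0 : 0 < x) (h1 : x < 1) :
    rogersL x + rogersL (1 - x) = π ^ 2 / 6 := by
  have hc : ContinuousOn (fun s => rogersL s + rogersL (1 - s)) (Icc 0 x) := by
    refine (continuousOn_rogersL.mono (Icc_subset_Icc_right h1.le)).add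
      (continuousOn_rogersL.comp (by fun_prop) fun s hs => ⟨?_, ?_⟩) <;> linarith [hs.1, hs.2]
  -- The sum has derivative zero, so by the mean value theorem it takes its value at `0`.
  obtain ⟨c, -, hc'⟩ := exists_hasDerivAt_eq_slope _ (fun _ => 0) h0 hc fun s hs => by
    have hd := (hasDerivAt_rogersL (x := 1 - s) (by linarith [hs.2]) (by linarith [hs.1])).comp s
      ((hasDerivAt_id s).const_sub 1)
    refine ((hasDerivAt_rogersL hs.1 (hs.2.trans h1)).add hd).congr_deriv ?_
    simp only [sub_sub_cancel]
    ring
  rw [eq_comm, div_eq_zero_iff] at hc'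
  have := hc'.resolve_right (by linarith)
  simp only [sub_zero, rogersL_zero, rogersL_one] at this
  linarith

lemma div_mem_Ioo_zero_one {p q : ℝ} (hp : 0 < p) (h : p < q) : p / q ∈ Ioo (0:ℝ) 1 :=
  ⟨div_pos hp (hp.trans h), (div_lt_one (hp.trans h)).2 h⟩

lemma continuousOn_rogersL_div {p q : ℝ → ℝ} {b : ℝ} (hp : Continuous p) (hq : Continuous q)
    (h : ∀ s ∈ Icc 0 b, 0 ≤ p s ∧ p s ≤ q s ∧ 0 < q s) :
    ContinuousOn (fun s => rogersL (p s / q s)) (Icc 0 b) := by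
  refine continuousOn_rogersL.comp
    (hp.continuousOn.div hq.continuousOn fun s hs => (h s hs).2.2.ne') fun s hs => ?_
  obtain ⟨h1, h2, h3⟩ := h s hs
  exact ⟨by positivity, (div_le_one h3).2 h2⟩

/-- The sum of the six Rogers dilogarithms, each argument in the shape `p / (p + r)`, as a
function of the first parameter. -/
noncomputable def sixSum (y s : ℝ) : ℝ :=
  rogersL (s * y / (s * y + (1 + y))) + rogersL (s * y / (s * y + (1 + s))) +
    rogersL (s / (s + (1 + y + s * y))) + rogersL (y / (y + (1 + s + s * y))) +
    rogersL (1 / (1 + s * (1 + y))) + rogersL (1 / (1 + y * (1 + s)))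

lemma continuousOn_sixSum {y b : ℝ} (hy : 0 < y) : ContinuousOn (sixSum y) (Icc 0 b) := by
  unfold sixSum
  refine (((((continuousOn_rogersL_div ?_ ?_ ?_).add (continuousOn_rogersL_div ?_ ?_ ?_)).add
    (continuousOn_rogersL_div ?_ ?_ ?_)).add (continuousOn_rogersL_div ?_ ?_ ?_)).add
    (continuousOn_rogersL_div ?_ ?_ ?_)).add (continuousOn_rogersL_div ?_ ?_ ?_)
  all_goals first
    | fun_prop
    | (rintro s ⟨hs, -⟩
       have : 0 ≤ s * y := by positivity
       refine ⟨by positivity, ?_, by positivity⟩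
       nlinarith)

lemma hasDerivAt_sixSum {y s : ℝ} (hy : 0 < y) (hs : 0 < s) : HasDerivAt (sixSum y) 0 s := by
  have hsy : HasDerivAt (fun s : ℝ => s * y) y s := by
    simpa using (hasDerivAt_id s).mul_const y
  have hid : HasDerivAt (fun s : ℝ => s) 1 s := hasDerivAt_id s
  have h1s : HasDerivAt (fun s : ℝ => 1 + s) 1 s := hid.const_add 1
  have hk (k : ℝ) : HasDerivAt (fun _ : ℝ => k) 0 s := hasDerivAt_const s k
  have d1 := hasDerivAt_rogersL_comp hsy (hk (1 + y)) (by positivity) (by positivity)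
  have d2 := hasDerivAt_rogersL_comp hsy h1s (by positivity) (by positivity)
  have d3 := hasDerivAt_rogersL_comp hid (hsy.const_add (1 + y)) hs (by positivity)
  have d4 := hasDerivAt_rogersL_comp (hk y) (h1s.add hsy) hy
    (by simp only [Pi.add_apply]; positivity)
  have d5 := hasDerivAt_rogersL_comp (hk 1) (hid.mul_const (1 + y)) one_pos (by positivity)
  have d6 := hasDerivAt_rogersL_comp (hk 1) (h1s.const_mul y) one_pos (by positivity)
  refine (((((d1.add d2).add d3).add d4).add d5).add d6).congr_deriv ?_
  simp only [Pi.add_apply]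
  -- The sums `p + r` factor, or coincide with one of the two trinomials below.
  rw [show s * y + (1 + y) = 1 + y + s * y by ring, show s * y + (1 + s) = 1 + s + s * y by ring,
    show s + (1 + y + s * y) = (1 + s) * (1 + y) by ring,
    show y + (1 + s + s * y) = (1 + s) * (1 + y) by ring,
    show 1 + s * (1 + y) = 1 + s + s * y by ring,
    show 1 + y * (1 + s) = 1 + y + s * y by ring]
  have e1 : 0 < 1 + s := by positivity
  have e2 : 0 < 1 + y := by positivity
  rw [log_mul hs.ne' hy.ne', log_mul e1.ne' e2.ne', log_mul hs.ne' e2.ne', log_mul hy.ne' e1.ne',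
    log_one]
  have e3 : 0 < 1 + y + s * y := by positivity
  have e4 : 0 < 1 + s + s * y := by positivity
  generalize log (1 + y + s * y) = l1
  generalize log (1 + s + s * y) = l2
  generalize log (1 + s) = l3
  generalize log (1 + y) = l4
  generalize log s = l5
  generalize log y = l6
  field_simp
  ring

lemma sixSum_zero {y : ℝ} (hy : 0 < y) : sixSum y 0 = π ^ 2 / 3 := by
  have h := rogersL_add_rogersL_one_sub (x := 1 / (1 + y)) (by positivity)
    ((div_lt_one (by positivity)).2 (by linarith))
  rw [show 1 - 1 / (1 + y) = y / (y + 1) by field_simp; ring] at h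
  simp only [sixSum, zero_mul, zero_div, add_zero, mul_one, div_one, rogersL_zero, rogersL_one]
  linarith

lemma sixSum_eq {y s : ℝ} (hy : 0 < y) (hs : 0 < s) : sixSum y s = π ^ 2 / 3 := by
  obtain ⟨c, -, hc⟩ := exists_hasDerivAt_eq_slope (sixSum y) (fun _ => 0) hs
    (continuousOn_sixSum hy) fun t ht => hasDerivAt_sixSum hy ht.1
  rw [eq_comm, div_eq_zero_iff] at hc
  linarith [hc.resolve_right (by linarith), sixSum_zero hy]

/-- The dilogarithm identity `∑_X L(1 − v_X) = n·π²/6` for the preprojective algebra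
`Π_{A₂}` (which has `n = 2` simple modules and six indecomposable two-term complexes
of projectives); each of the six arguments lies in `(0,1)`. -/
theorem preprojectiveA2_dilogarithm_identity (y₁ y₂ : ℝ) (hy₁ : 0 < y₁) (hy₂ : 0 < y₂) :
    y₁ * y₂ / (1 + y₂ + y₁ * y₂) ∈ Set.Ioo (0:ℝ) 1 ∧
    y₁ * y₂ / (1 + y₁ + y₁ * y₂) ∈ Set.Ioo (0:ℝ) 1 ∧
    y₁ / ((1 + y₁) * (1 + y₂)) ∈ Set.Ioo (0:ℝ) 1 ∧
    y₂ / ((1 + y₁) * (1 + y₂)) ∈ Set.Ioo (0:ℝ) 1 ∧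
    1 / (1 + y₁ + y₁ * y₂) ∈ Set.Ioo (0:ℝ) 1 ∧
    1 / (1 + y₂ + y₁ * y₂) ∈ Set.Ioo (0:ℝ) 1 ∧
    rogersL (y₁ * y₂ / (1 + y₂ + y₁ * y₂)) + rogersL (y₁ * y₂ / (1 + y₁ + y₁ * y₂)) +
      rogersL (y₁ / ((1 + y₁) * (1 + y₂))) + rogersL (y₂ / ((1 + y₁) * (1 + y₂))) +
      rogersL (1 / (1 + y₁ + y₁ * y₂)) + rogersL (1 / (1 + y₂ + y₁ * y₂)) =
      Real.pi ^ 2 / 3 := by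
  have h12 : 0 < y₁ * y₂ := mul_pos hy₁ hy₂
  refine ⟨div_mem_Ioo_zero_one h12 (by linarith), div_mem_Ioo_zero_one h12 (by linarith),
    div_mem_Ioo_zero_one hy₁ (by nlinarith), div_mem_Ioo_zero_one hy₂ (by nlinarith),
    div_mem_Ioo_zero_one one_pos (by linarith), div_mem_Ioo_zero_one one_pos (by linarith), ?_⟩
  rw [← sixSum_eq hy₂ hy₁, sixSum]
  congr! 3 <;> ring_nf
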